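/- Let k ≥ 1, δ ≥ 2, n ≥ (δ² + kδ + 7δ + 6k + 9)(δ² + kδ + 1), and let G ∈ 𝓑₂(n,k,δ). Let h be a positive eigenvector of Q(G) for the eigenvalue q(G), and suppose q(G) > 2(n − δ − k − 1) − 1. Set Y₁ = {i ∈ Y : d_G(i) = n−1} and Z₁ = {i ∈ Z : d_G(i) = n−δ−k−1}. If Y₁ ≠ ∅, then h_i > h_j for all i ∈ Y₁ and all j ∈ Z₁. -/

import Mathlib

open Finset Matrix

/-- The signless Laplacian matrix `Q(G) = D(G) + A(G)` of a graph. -/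
noncomputable def signlessLaplacian {V : Type*} [Fintype V] [DecidableEq V]
    (G : SimpleGraph V) [DecidableRel G.Adj] : Matrix V V ℝ :=
  Matrix.diagonal (fun v => (G.degree v : ℝ)) + G.adjMatrix ℝ

/-- The Q-index (largest eigenvalue of the signless Laplacian). -/
noncomputable def qIndex {V : Type*} [Fintype V] [DecidableEq V]
    (G : SimpleGraph V) [DecidableRel G.Adj] : ℝ :=
  sSup {μ : ℝ | ∃ x : V → ℝ, x ≠ 0 ∧ signlessLaplacian G *ᵥ x = μ • x}

/-- The adjacency spectral radius (largest eigenvalue of the adjacency matrix). -/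
noncomputable def adjSpecRad {V : Type*} [Fintype V] [DecidableEq V]
    (G : SimpleGraph V) [DecidableRel G.Adj] : ℝ :=
  sSup {μ : ℝ | ∃ x : V → ℝ, x ≠ 0 ∧ G.adjMatrix ℝ *ᵥ x = μ • x}

/-- A graph is `k`-path-coverable if its vertex set can be covered by at most `k`
vertex-disjoint paths. -/
def PathCoverable {V : Type*} (G : SimpleGraph V) (k : ℕ) : Prop :=
  ∃ (m : ℕ) (P : Fin m → Σ (u : V) (v : V), G.Walk u v),
    m ≤ k ∧
    (∀ i, (P i).2.2.IsPath) ∧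
    (∀ v : V, ∃ i, v ∈ (P i).2.2.support) ∧
    (∀ i j, i ≠ j → ∀ v, v ∈ (P i).2.2.support → v ∉ (P j).2.2.support)

/-- A graph is traceable if it has a Hamilton path. -/
def Traceable {V : Type*} (G : SimpleGraph V) : Prop :=
  ∃ (u v : V) (p : G.Walk u v), p.IsPath ∧ ∀ w, w ∈ p.support

/-- `B(n,k,δ) = K_δ ∨ (K_{n-2δ-k} ∪ complement K_{δ+k})`: the first `δ` vertices form the
dominating clique `Y`, the next `n-2δ-k` vertices form the clique `Z`, and the
last `δ+k` vertices form the independent set `X`. -/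
def Bgraph (n k δ : ℕ) : SimpleGraph (Fin n) where
  Adj i j := i ≠ j ∧ ((i : ℕ) < δ ∨ (j : ℕ) < δ ∨
      ((i : ℕ) < n - (δ + k) ∧ (j : ℕ) < n - (δ + k)))
  symm := by
    constructor
    rintro i j ⟨hne, h⟩
    exact ⟨hne.symm, by tauto⟩
  loopless := by
    constructor
    rintro i ⟨h, -⟩
    exact h rfl

instance (n k δ : ℕ) : DecidableRel (Bgraph n k δ).Adj := fun i j =>
  inferInstanceAs (Decidable (i ≠ j ∧ ((i : ℕ) < δ ∨ (j : ℕ) < δ ∨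
      ((i : ℕ) < n - (δ + k) ∧ (j : ℕ) < n - (δ + k)))))

instance {n : ℕ} (G : SimpleGraph (Fin n)) [DecidableRel G.Adj]
    (E' : Finset (Sym2 (Fin n))) : DecidableRel (G.deleteEdges ↑E').Adj := fun a b =>
  decidable_of_iff (G.Adj a b ∧ s(a, b) ∉ E') (by simp)

/-- The edge set `E₁` of `B(n,k,δ)`: edges with both endpoints in `Y ∪ Z`. -/
def IsE1Edge (n k δ : ℕ) (e : Sym2 (Fin n)) : Prop :=
  e ∈ (Bgraph n k δ).edgeSet ∧ ∀ v ∈ e, (v : ℕ) < n - (δ + k)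

/-- The family `𝓑₁(n,k,δ)`, up to isomorphism. -/
def InB1 (n k δ : ℕ) (G : SimpleGraph (Fin n)) : Prop :=
  ∃ E' : Finset (Sym2 (Fin n)),
    (∀ e ∈ E', IsE1Edge n k δ e) ∧ E'.card ≤ δ * (δ + k) / 4 ∧
    Nonempty (G ≃g (Bgraph n k δ).deleteEdges ↑E')

/-- The family `𝓑₂(n,k,δ)`, up to isomorphism. -/
def InB2 (n k δ : ℕ) (G : SimpleGraph (Fin n)) : Prop :=
  ∃ E' : Finset (Sym2 (Fin n)),
    (∀ e ∈ E', IsE1Edge n k δ e) ∧ E'.card = δ * (δ + k) / 4 + 1 ∧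
    Nonempty (G ≃g (Bgraph n k δ).deleteEdges ↑E')

/-! The eigenvalue equation at `v` reads `(μ - d v) * h v = ∑ u ∈ N(v), h u`. When every neighbour
of `j` other than `i` is also a neighbour of `i`, comparing the equations at `i` and `j`, over
closed neighbourhoods if `i` and `j` are adjacent and over open ones otherwise, gives
`(μ - d j + a) * h j ≤ (μ - d i + a) * h i` with `a = 1` or `a = 0` respectively. Positivity of `h`
forces `d i ≤ μ`, so a larger degree at `i` makes the factor of `h i` strictly smaller than that of
`h j`, whence `h j < h i`. A vertex of `Y₁` is adjacent to all other vertices, so it is comparable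
in this way with every vertex of `Z₁`, whose degree is smaller. -/

section

variable {V : Type*} [Fintype V] {G : SimpleGraph V} [DecidableRel G.Adj] {i j : V}

lemma sum_neighborFinset_add_adjMatrix_mul_le {R : Type*} [NonAssocSemiring R] [PartialOrder R]
    [IsOrderedAddMonoid R] {x : V → R} (hx : 0 ≤ x)
    (hsub : G.neighborSet j ⊆ insert i (G.neighborSet i)) :
    ∑ u ∈ G.neighborFinset j, x u + G.adjMatrix R i j * x j
      ≤ ∑ u ∈ G.neighborFinset i, x u + G.adjMatrix R i j * x i := by
  classical
  by_cases hadj : G.Adj i j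
  · have hclosed : insert j (G.neighborFinset j) ⊆ insert i (G.neighborFinset i) := by
      intro u hu
      rcases mem_insert.mp hu with rfl | hu
      · simp [hadj]
      · simpa using hsub ((G.mem_neighborFinset j u).mp hu)
    have hle := sum_le_sum_of_subset_of_nonneg hclosed fun u _ _ ↦ hx u
    simpa [hadj, sum_insert, add_comm] using hle
  · have hopen : G.neighborFinset j ⊆ G.neighborFinset i := by
      intro u hu
      have hju : G.Adj j u := (G.mem_neighborFinset j u).mp hu
      rcases hsub hju with rfl | hiu
      · exact absurd hju.symm hadj
      · exact (G.mem_neighborFinset i u).mpr hiu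
    simpa [hadj] using sum_le_sum_of_subset_of_nonneg hopen fun u _ _ ↦ hx u

variable [DecidableEq V] {μ : ℝ} {h : V → ℝ}

lemma signlessLaplacian_mulVec_apply (x : V → ℝ) (v : V) :
    (signlessLaplacian G *ᵥ x) v = G.degree v * x v + ∑ u ∈ G.neighborFinset v, x u := by
  rw [signlessLaplacian, add_mulVec, Pi.add_apply, mulVec_diagonal,
    SimpleGraph.adjMatrix_mulVec_apply]

lemma sub_degree_mul_eq_sum_neighborFinset (heig : signlessLaplacian G *ᵥ h = μ • h) (v : V) :
    (μ - G.degree v) * h v = ∑ u ∈ G.neighborFinset v, h u := by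
  have hv := congrFun heig v
  rw [signlessLaplacian_mulVec_apply, Pi.smul_apply, smul_eq_mul] at hv
  linarith

lemma degree_le_of_signlessLaplacian_mulVec_eq_smul {v : V}
    (heig : signlessLaplacian G *ᵥ h = μ • h) (hnonneg : 0 ≤ h) (hv : 0 < h v) :
    (G.degree v : ℝ) ≤ μ := by
  have hmul : 0 ≤ (μ - G.degree v) * h v := by
    rw [sub_degree_mul_eq_sum_neighborFinset heig v]
    exact sum_nonneg fun u _ ↦ hnonneg u
  exact sub_nonneg.mp (nonneg_of_mul_nonneg_left hmul hv)

theorem eigenvector_Y1_gt_Z1_general (heig : signlessLaplacian G *ᵥ h = μ • h) (hnonneg : 0 ≤ h)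
    (hi : 0 < h i) (hsub : G.neighborSet j ⊆ insert i (G.neighborSet i))
    (hdeg : G.degree j < G.degree i) : h j < h i := by
  set a : ℝ := G.adjMatrix ℝ i j with ha_def
  have ha : 0 ≤ a := by
    rw [ha_def, SimpleGraph.adjMatrix_apply]
    positivity
  have hdeg' : (G.degree j : ℝ) < G.degree i := Nat.cast_lt.mpr hdeg
  have hiμ : (G.degree i : ℝ) ≤ μ := degree_le_of_signlessLaplacian_mulVec_eq_smul heig hnonneg hi
  have hcoeff : 0 ≤ μ - G.degree j + a := by linarith
  refine lt_of_mul_lt_mul_left ?_ hcoeff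
  calc (μ - G.degree j + a) * h j
      = ∑ u ∈ G.neighborFinset j, h u + a * h j := by
        rw [add_mul, sub_degree_mul_eq_sum_neighborFinset heig]
    _ ≤ ∑ u ∈ G.neighborFinset i, h u + a * h i :=
        sum_neighborFinset_add_adjMatrix_mul_le hnonneg hsub
    _ = (μ - G.degree i + a) * h i := by
        rw [add_mul, sub_degree_mul_eq_sum_neighborFinset heig]
    _ < (μ - G.degree j + a) * h i := by gcongr

end

/-- **Lemma 3.5 (3)**: for `G ∈ 𝓑₂(n,k,δ)` and a positive `q(G)`-eigenvector `h`, with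
`q(G) > 2(n-δ-k-1) - 1`: if `Y₁ ≠ ∅`, then `h i > h j` for all `i ∈ Y₁` and `j ∈ Z₁`. -/
theorem eigenvector_Y1_gt_Z1 (k δ n : ℕ) (hk : 1 ≤ k) (hδ : 2 ≤ δ)
    (hn : (δ ^ 2 + k * δ + 7 * δ + 6 * k + 9) * (δ ^ 2 + k * δ + 1) ≤ n)
    (E' : Finset (Sym2 (Fin n))) (hE : ∀ e ∈ E', IsE1Edge n k δ e)
    (hcard : E'.card = δ * (δ + k) / 4 + 1)
    (G : SimpleGraph (Fin n)) [DecidableRel G.Adj]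
    (hG : G = (Bgraph n k δ).deleteEdges ↑E')
    (h : Fin n → ℝ) (hpos : ∀ v, 0 < h v)
    (heig : signlessLaplacian G *ᵥ h = qIndex G • h)
    (hq : 2 * ((n : ℝ) - δ - k - 1) - 1 < qIndex G)
    (hY1 : ∃ i : Fin n, (i : ℕ) < δ ∧ G.degree i = n - 1) :
    ∀ i j : Fin n,
      (i : ℕ) < δ → G.degree i = n - 1 →
      δ ≤ (j : ℕ) → (j : ℕ) < n - (δ + k) → G.degree j = n - δ - k - 1 →
      h j < h i := by
  intro i j _ hdi _ hj' hdj
  have huniv : G.IsUniversal i := (G.degree_eq_card_sub_one i).mp (by rw [hdi, Fintype.card_fin])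
  refine eigenvector_Y1_gt_Z1_general heig (fun v ↦ (hpos v).le) (hpos i) ?_ (by omega)
  simp [SimpleGraph.insert_neighborSet_eq_univ.mpr huniv]
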